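/- arXiv:1112.0201 — 2 statements merged into one kernel-verified Lean document; each statement's English description precedes it below -/
import Mathlib

section
/- For every fixed ε > 0 there are constants C₁ (depending on ε) and C₂ (depending on k) such that for all Q ≥ 1: (i) Σ_{Q < q ≤ 2Q} w_3(q)^4 ≤ C₁·Q^{−1+ε}; and (ii) for every integer k ≥ 4, Σ_{Q < q ≤ 2Q} w_k(q)^k ≤ C₂·Q^{−1+1/k}. -/
open scoped BigOperators

/-- The multiplicative function `w_k`, with `w_k(p^{ku+v}) = k p^{-u-1/2}` if `v = 1`
and `w_k(p^{ku+v}) = p^{-u-1}` if `2 ≤ v ≤ k` (where `u ≥ 0`, `1 ≤ v ≤ k`). -/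
noncomputable def wk (k : ℕ) (n : ℕ) : ℝ :=
  ∏ p ∈ n.primeFactors,
    (if (n.factorization p - 1) % k = 0 then
      (k : ℝ) * (p : ℝ) ^ (-(((n.factorization p - 1) / k : ℕ) : ℝ) - 1 / 2)
    else
      (p : ℝ) ^ (-(((n.factorization p - 1) / k : ℕ) : ℝ) - 1))

/-!
A nonnegative multiplicative function `f` with `f (p ^ j) ≪ p ^ (-1 - σ * j)` has
`∑ n, n ^ τ * f n < ∞` for all `τ < σ`, by bounding its Euler product. For `k < l` and `4 ≤ l`
the function `w_k ^ l` satisfies this with `σ = 1`, and Rankin's trick gives the bound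
`Q ^ (-1 + ε)`.

For `w_k ^ k` the hypothesis holds with `σ = 1 - 1 / (2 * k) > 1 - 1 / k`, except at the prime
powers `p ^ k`, where `w_k (p ^ k) ^ k = p ^ (-k)`. So write `q = m ^ k * r`, where `m` is the
product of the primes whose exponent in `q` is exactly `k`; then `w_k q ^ k = m ^ (-k) * w_k r ^ k`.
For `Q < q ≤ 2 * Q` and fixed `r`, there are at most `(2 * Q / r) ^ (1 / k)` choices of `m`, each
with `m ^ (-k) ≤ r / Q`, so the sum is
`≪ Q ^ (-1 + 1 / k) * ∑ r, r ^ (1 - 1 / k) * w_k r ^ k`, a convergent series over the remaining `r`.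
-/

section Multiplicative

open Real Finset

variable {f : ℕ → ℝ} (hf₀ : ∀ n, 0 ≤ f n) (hf₁ : f 1 = 1)
  (hmul : ∀ {m n : ℕ}, m.Coprime n → f (m * n) = f m * f n)

include hf₀ hf₁ hmul

lemma sum_range_succ_le_exp_tsum_primes_pow
    (hs : Summable fun x : Nat.Primes × ℕ ↦ f (x.1 ^ (x.2 + 1))) (N : ℕ) :
    ∑ n ∈ range N, f (n + 1) ≤ exp (∑' x : Nat.Primes × ℕ, f (x.1 ^ (x.2 + 1))) := by
  let T : ℕ → ℝ := fun p ↦ ∑' j, f (p ^ (j + 1))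
  have hp : ∀ {p : ℕ}, p.Prime → Summable fun j ↦ f (p ^ j) := fun {p} hp ↦
    (summable_nat_add_iff 1).1 (hs.prod_factor ⟨p, hp⟩)
  have euler := (EulerProduct.summable_and_hasSum_smoothNumbers_prod_primesBelow_tsum
    hf₁ hmul (fun h ↦ (hp h).norm) (N + 1)).2
  calc ∑ n ∈ range N, f (n + 1)
      = ∑ n ∈ (Ico 1 (N + 1)).subtype (· ∈ (N + 1).smoothNumbers), f n := by
        rw [range_eq_Ico, sum_Ico_add' f 0 N 1, zero_add]
        refine (sum_subtype_of_mem f fun n hn ↦ ?_).symm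
        rw [mem_Ico] at hn
        exact Nat.mem_smoothNumbers_of_lt (by lia) hn.2
    _ ≤ ∏ p ∈ (N + 1).primesBelow, ∑' j, f (p ^ j) :=
        sum_le_hasSum _ (fun _ _ ↦ hf₀ _) euler
    _ = ∏ p ∈ (N + 1).primesBelow, (1 + T p) := by
        refine prod_congr rfl fun p h ↦ ?_
        rw [(hp (Nat.prime_of_mem_primesBelow h)).tsum_eq_zero_add, pow_zero, hf₁]
    _ ≤ exp (∑ p ∈ (N + 1).primesBelow, T p) :=
        prod_one_add_le_exp_sum _ fun _ ↦ tsum_nonneg fun _ ↦ hf₀ _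
    _ ≤ exp (∑' x : Nat.Primes × ℕ, f (x.1 ^ (x.2 + 1))) := by
        rw [hs.tsum_prod, ← sum_subtype_of_mem T fun _ ↦ Nat.prime_of_mem_primesBelow]
        gcongr
        exact hs.prod.sum_le_tsum (ι := Nat.Primes) _ fun _ _ ↦ tsum_nonneg fun _ ↦ hf₀ _

lemma summable_of_summable_primes_pow
    (hs : Summable fun x : Nat.Primes × ℕ ↦ f (x.1 ^ (x.2 + 1))) : Summable f :=
  (summable_nat_add_iff 1).1 <| summable_of_sum_range_le (fun _ ↦ hf₀ _)
    (sum_range_succ_le_exp_tsum_primes_pow hf₀ hf₁ hmul hs)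

lemma summable_rpow_mul_of_prime_pow_le {C σ τ : ℝ} (hτ : τ < σ)
    (hC : ∀ p j : ℕ, p.Prime → j ≠ 0 → f (p ^ j) ≤ C * (p : ℝ) ^ (-(1 + σ * j))) :
    Summable fun n : ℕ ↦ (n : ℝ) ^ τ * f n := by
  have hprimes : Summable fun p : Nat.Primes ↦ C * (p : ℝ) ^ (-(1 + (σ - τ))) :=
    (Nat.Primes.summable_rpow.2 (by linarith)).mul_left C
  have hgeom : Summable fun j : ℕ ↦ ((2 : ℝ) ^ (-(σ - τ))) ^ j :=
    summable_geometric_of_lt_one (by positivity)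
      (rpow_lt_one_of_one_lt_of_neg one_lt_two (by linarith))
  have hC₀ : 0 ≤ C := nonneg_of_mul_nonneg_left
    ((hf₀ _).trans (hC 2 1 Nat.prime_two one_ne_zero)) (by positivity)
  refine summable_of_summable_primes_pow (fun n ↦ mul_nonneg (by positivity) (hf₀ n)) (by simpa)
    (fun {m n} h ↦ ?_) <| (hprimes.mul_of_nonneg hgeom (fun _ ↦ by positivity)
    fun _ ↦ by positivity).of_nonneg_of_le (fun _ ↦ mul_nonneg (by positivity) (hf₀ _)) ?_
  · rw [hmul h, Nat.cast_mul, mul_rpow m.cast_nonneg n.cast_nonneg]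
    ring
  rintro ⟨⟨p, hp⟩, j⟩
  have hp₀ : (0 : ℝ) < p := mod_cast hp.pos
  have hp₂ : (2 : ℝ) ≤ p := mod_cast hp.two_le
  calc ((p ^ (j + 1) : ℕ) : ℝ) ^ τ * f (p ^ (j + 1))
      ≤ ((p ^ (j + 1) : ℕ) : ℝ) ^ τ * (C * (p : ℝ) ^ (-(1 + σ * (j + 1 : ℕ)))) := by
        gcongr
        exact hC p (j + 1) hp j.succ_ne_zero
    _ = C * (p : ℝ) ^ (-(1 + (σ - τ))) * ((p : ℝ) ^ (-(σ - τ))) ^ j := by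
        rw [Nat.cast_pow, ← rpow_natCast, ← rpow_natCast, ← rpow_mul hp₀.le, ← rpow_mul hp₀.le,
          mul_left_comm, ← rpow_add hp₀, mul_assoc, ← rpow_add hp₀]
        push_cast
        ring_nf
    _ ≤ C * (p : ℝ) ^ (-(1 + (σ - τ))) * ((2 : ℝ) ^ (-(σ - τ))) ^ j := by
        gcongr ?_ * ?_ ^ _
        exact rpow_le_rpow_of_nonpos two_pos hp₂ (by linarith)

end Multiplicative

section SumBounds

open Real Finset

variable {f g : ℕ → ℝ} {Q : ℝ}

lemma sum_le_tsum_rpow_mul_mul_rpow_neg (hf : ∀ n, 0 ≤ f n) {σ : ℝ} (hσ : 0 ≤ σ)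
    (hs : Summable fun n : ℕ ↦ (n : ℝ) ^ σ * f n) (hQ : 0 < Q) {s : Finset ℕ}
    (hsQ : ∀ q ∈ s, Q ≤ q) :
    ∑ q ∈ s, f q ≤ (∑' n : ℕ, (n : ℝ) ^ σ * f n) * Q ^ (-σ) := by
  rw [rpow_neg hQ.le, ← div_eq_mul_inv, le_div_iff₀' (by positivity), mul_sum]
  calc ∑ q ∈ s, Q ^ σ * f q ≤ ∑ q ∈ s, (q : ℝ) ^ σ * f q := by
        gcongr with q hq
        · exact hf q
        · exact hsQ q hq
    _ ≤ ∑' n : ℕ, (n : ℝ) ^ σ * f n :=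
        hs.sum_le_tsum _ fun n _ ↦ mul_nonneg (by positivity) (hf n)

lemma card_le_rpow_of_forall_exists_eq_pow_mul {k r : ℕ} (hk : k ≠ 0) (hr : r ≠ 0) {x : ℝ}
    (hx : 0 ≤ x) {s : Finset ℕ} (hs : ∀ q ∈ s, q ≠ 0 ∧ (q : ℝ) ≤ x ∧ ∃ m : ℕ, q = m ^ k * r) :
    (#s : ℝ) ≤ (x / r) ^ (1 / (k : ℝ)) := by
  have hr₀ : (0 : ℝ) < r := mod_cast hr.bot_lt
  have hsub : s ⊆ (Icc 1 ⌊(x / r) ^ (1 / (k : ℝ))⌋₊).image (· ^ k * r) := fun q hq ↦ by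
    obtain ⟨hq₀, hqx, m, rfl⟩ := hs q hq
    refine mem_image_of_mem _ (mem_Icc.2 ⟨Nat.one_le_iff_ne_zero.2 ?_, Nat.le_floor ?_⟩)
    · exact ne_zero_of_dvd_ne_zero hq₀ ((dvd_pow_self m hk).mul_right r)
    rw [one_div, le_rpow_inv_iff_of_pos m.cast_nonneg (by positivity) (by positivity),
      rpow_natCast, le_div_iff₀ hr₀]
    exact_mod_cast hqx
  calc (#s : ℝ) ≤ ⌊(x / r) ^ (1 / (k : ℝ))⌋₊ := by
        simpa using (card_le_card hsub).trans card_image_le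
    _ ≤ (x / r) ^ (1 / (k : ℝ)) := Nat.floor_le (by positivity)

lemma sum_natCast_mul_comp_le_rpow_mul_tsum {ι : Type*} {s : Finset ι} {R : ι → ℕ} {x θ : ℝ}
    (hx : 0 ≤ x) (hg : ∀ n, 0 ≤ g n) (hsum : Summable fun r : ℕ ↦ (r : ℝ) ^ (1 - θ) * g r)
    (hR₀ : ∀ i ∈ s, R i ≠ 0) (hR : ∀ i ∈ s, (#{j ∈ s | R j = R i} : ℝ) ≤ (x / R i) ^ θ) :
    ∑ i ∈ s, R i * g (R i) ≤ x ^ θ * ∑' r : ℕ, (r : ℝ) ^ (1 - θ) * g r := by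
  calc ∑ i ∈ s, R i * g (R i) = ∑ r ∈ s.image R, #{i ∈ s | R i = r} * (r * g r) := by
        simp only [sum_comp (fun r : ℕ ↦ r * g r) R, nsmul_eq_mul]
    _ ≤ ∑ r ∈ s.image R, (x / r) ^ θ * (r * g r) := by
        gcongr with r hr
        · exact mul_nonneg r.cast_nonneg (hg r)
        · obtain ⟨i, hi, rfl⟩ := mem_image.1 hr
          exact hR i hi
    _ = x ^ θ * ∑ r ∈ s.image R, (r : ℝ) ^ (1 - θ) * g r := by
        rw [mul_sum]
        refine sum_congr rfl <| forall_mem_image.2 fun i hi ↦ ?_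
        have hr : (0 : ℝ) < R i := mod_cast (hR₀ i hi).bot_lt
        rw [div_rpow hx hr.le, rpow_sub hr, rpow_one]
        ring
    _ ≤ x ^ θ * ∑' r : ℕ, (r : ℝ) ^ (1 - θ) * g r := by
        gcongr
        exact hsum.sum_le_tsum _ fun r _ ↦ mul_nonneg (by positivity) (hg r)

lemma sum_Ioc_le_of_forall_exists_eq_pow_mul {k : ℕ} (hk : k ≠ 0) (hg : ∀ n, 0 ≤ g n)
    (hfg : ∀ q ≠ 0, ∃ m r : ℕ, q = m ^ k * r ∧ f q ≤ g r / (m : ℝ) ^ k)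
    (hs : Summable fun r : ℕ ↦ (r : ℝ) ^ (1 - 1 / (k : ℝ)) * g r) (hQ : 0 < Q) {x : ℝ}
    (hx : 0 ≤ x) :
    ∑ q ∈ Ioc ⌊Q⌋₊ ⌊x⌋₊, f q ≤
      Q⁻¹ * (x ^ (1 / (k : ℝ)) * ∑' r : ℕ, (r : ℝ) ^ (1 - 1 / (k : ℝ)) * g r) := by
  set S := Ioc ⌊Q⌋₊ ⌊x⌋₊
  have hS : ∀ q ∈ S, q ≠ 0 ∧ Q < q ∧ (q : ℝ) ≤ x := fun q hq ↦ by
    rw [mem_Ioc, Nat.floor_lt hQ.le, Nat.le_floor_iff hx] at hq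
    exact ⟨Nat.cast_ne_zero.1 (hQ.trans hq.1).ne', hq⟩
  have hdecomp : ∀ q ∈ S, ∃ r ≠ 0, (∃ m : ℕ, q = m ^ k * r) ∧ f q ≤ Q⁻¹ * (r * g r) := by
    intro q hq
    obtain ⟨hq₀, hQq, -⟩ := hS q hq
    obtain ⟨m, r, rfl, hfq⟩ := hfg q hq₀
    have hm : 0 < (m : ℝ) ^ k := mod_cast (left_ne_zero_of_mul hq₀).bot_lt
    refine ⟨r, right_ne_zero_of_mul hq₀, ⟨m, rfl⟩, hfq.trans ?_⟩
    rw [div_le_iff₀ hm, inv_mul_eq_div, div_mul_eq_mul_div, le_div_iff₀ hQ]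
    calc g r * Q ≤ g r * (m ^ k * r : ℕ) := mul_le_mul_of_nonneg_left hQq.le (hg r)
      _ = r * g r * (m : ℝ) ^ k := by push_cast; ring
  choose! R hR₀ hRpow hfR using hdecomp
  have hfiber : ∀ q ∈ S, (#{q' ∈ S | R q' = R q} : ℝ) ≤ (x / R q) ^ (1 / (k : ℝ)) := by
    refine fun q hq ↦ card_le_rpow_of_forall_exists_eq_pow_mul hk (hR₀ q hq) hx fun q' hq' ↦ ?_
    obtain ⟨hq', hRq'⟩ := mem_filter.1 hq'
    exact ⟨(hS q' hq').1, (hS q' hq').2.2, hRq' ▸ hRpow q' hq'⟩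
  calc ∑ q ∈ S, f q ≤ Q⁻¹ * ∑ q ∈ S, R q * g (R q) := by
        rw [mul_sum]
        exact sum_le_sum hfR
    _ ≤ Q⁻¹ * (x ^ (1 / (k : ℝ)) * ∑' r : ℕ, (r : ℝ) ^ (1 - 1 / (k : ℝ)) * g r) := by
        gcongr
        exact sum_natCast_mul_comp_le_rpow_mul_tsum hx hg hs hR₀ hfiber

end SumBounds

section Weights

open Real

lemma wk_nonneg (k n : ℕ) : 0 ≤ wk k n :=
  Finset.prod_nonneg fun p _ ↦ by positivity

lemma wk_one (k : ℕ) : wk k 1 = 1 := by simp [wk]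

lemma wk_mul (k : ℕ) {m n : ℕ} (h : m.Coprime n) : wk k (m * n) = wk k m * wk k n := by
  simp only [wk, h.primeFactors_mul, Finset.prod_union h.disjoint_primeFactors]
  congr 1 <;> refine Finset.prod_congr rfl fun p hp ↦ ?_
  · rw [Nat.factorization_eq_of_coprime_left h (by simpa using hp)]
  · rw [Nat.factorization_eq_of_coprime_right h (by simpa using hp)]

lemma wk_prime_pow_mul_add_succ {k p v : ℕ} (hp : p.Prime) (hv : v < k) (u : ℕ) :
    wk k (p ^ (k * u + v + 1)) =
      if v = 0 then k * (p : ℝ) ^ (-(u : ℝ) - 1 / 2) else (p : ℝ) ^ (-(u : ℝ) - 1) := by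
  have hdiv : (k * u + v) / k = u := by
    rw [Nat.mul_add_div (by lia), Nat.div_eq_of_lt hv, add_zero]
  have hmod : (k * u + v) % k = v := by rw [Nat.mul_add_mod, Nat.mod_eq_of_lt hv]
  rw [wk, Nat.primeFactors_prime_pow (Nat.succ_ne_zero _) hp, Finset.prod_singleton,
    hp.factorization_pow, Finsupp.single_eq_same, Nat.add_sub_cancel, hdiv, hmod]

lemma wk_prime_pow_mul {k p i : ℕ} (hk : 2 ≤ k) (hp : p.Prime) (hi : i ≠ 0) :
    wk k (p ^ (k * i)) = (p : ℝ) ^ (-(i : ℝ)) := by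
  obtain ⟨u, rfl⟩ := Nat.exists_eq_succ_of_ne_zero hi
  rw [show k * u.succ = k * u + (k - 1) + 1 by rw [Nat.mul_succ]; lia,
    wk_prime_pow_mul_add_succ hp (by lia), if_neg (by lia)]
  push_cast
  ring_nf

lemma wk_prime_pow_pow_le {k l p j : ℕ} (hk : k ≠ 0) (hkl : k ≤ l) (hl : 4 ≤ l) (hp : p.Prime)
    (hj : j ≠ 0) (h : k < l ∨ ¬k ∣ j) :
    wk k (p ^ j) ^ l ≤ (k : ℝ) ^ l * (p : ℝ) ^ (-(1 + j : ℝ)) := by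
  obtain ⟨i, rfl⟩ := Nat.exists_eq_succ_of_ne_zero hj
  obtain ⟨u, v, hv, rfl⟩ : ∃ u v, v < k ∧ i = k * u + v :=
    ⟨i / k, i % k, Nat.mod_lt _ hk.bot_lt, (Nat.div_add_mod i k).symm⟩
  have hp₁ : (1 : ℝ) ≤ p := mod_cast hp.one_le
  have hku : k * u ≤ l * u := Nat.mul_le_mul_right u hkl
  rw [Nat.succ_eq_add_one, wk_prime_pow_mul_add_succ hp hv]
  split_ifs with hv₀
  · rw [mul_pow, ← rpow_mul_natCast p.cast_nonneg]
    gcongr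
    have hku' : (k * u : ℝ) ≤ l * u := mod_cast hku
    have hl' : (4 : ℝ) ≤ l := mod_cast hl
    push_cast [hv₀]
    linarith
  · have hexp : k * u + v + 2 ≤ l * u + l := by
      rcases h with h | h
      · lia
      · have hvk : v + 1 ≠ k := fun hvk ↦ h ⟨u + 1, by rw [Nat.mul_succ]; lia⟩
        lia
    have hexp' : (k * u + v + 2 : ℝ) ≤ l * u + l := mod_cast hexp
    rw [← rpow_mul_natCast p.cast_nonneg]
    calc (p : ℝ) ^ ((-u - 1 : ℝ) * l) ≤ (p : ℝ) ^ (-(1 + (k * u + v + 1 : ℕ) : ℝ)) := by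
          gcongr
          push_cast
          linarith
      _ ≤ (k : ℝ) ^ l * (p : ℝ) ^ (-(1 + (k * u + v + 1 : ℕ) : ℝ)) :=
          le_mul_of_one_le_left (by positivity)
            (one_le_pow₀ (mod_cast Nat.one_le_iff_ne_zero.2 hk))

lemma summable_rpow_mul_wk_pow {k l : ℕ} (hk : k ≠ 0) (hkl : k < l) (hl : 4 ≤ l) {τ : ℝ}
    (hτ : τ < 1) : Summable fun n : ℕ ↦ (n : ℝ) ^ τ * wk k n ^ l :=
  summable_rpow_mul_of_prime_pow_le (fun n ↦ pow_nonneg (wk_nonneg k n) l) (by simp [wk_one])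
    (fun h ↦ by rw [wk_mul k h, mul_pow]) hτ fun p j hp hj ↦ by
      simpa using wk_prime_pow_pow_le hk hkl.le hl hp hj (.inl hkl)

theorem exists_sum_Ioc_wk_pow_le_rpow_neg_one_add {k l : ℕ} (hk : k ≠ 0) (hkl : k < l)
    (hl : 4 ≤ l) {ε : ℝ} (hε : 0 < ε) :
    ∃ C > 0, ∀ Q : ℝ, 1 ≤ Q →
      ∑ q ∈ Finset.Ioc ⌊Q⌋₊ ⌊2 * Q⌋₊, wk k q ^ l ≤ C * Q ^ (-1 + ε) := by
  let σ := max (1 - ε) 0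
  have hw : ∀ n, 0 ≤ wk k n ^ l := fun n ↦ pow_nonneg (wk_nonneg k n) l
  have hs : Summable fun n : ℕ ↦ (n : ℝ) ^ σ * wk k n ^ l :=
    summable_rpow_mul_wk_pow hk hkl hl (max_lt (by linarith) one_pos)
  have hC : 0 < ∑' n : ℕ, (n : ℝ) ^ σ * wk k n ^ l :=
    hs.tsum_pos (fun n ↦ mul_nonneg (by positivity) (hw n)) 1 (by simp [wk_one])
  refine ⟨_, hC, fun Q hQ ↦ ?_⟩
  calc ∑ q ∈ Finset.Ioc ⌊Q⌋₊ ⌊2 * Q⌋₊, wk k q ^ l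
      ≤ (∑' n : ℕ, (n : ℝ) ^ σ * wk k n ^ l) * Q ^ (-σ) :=
        sum_le_tsum_rpow_mul_mul_rpow_neg hw (le_max_right _ _) hs (by linarith) fun q hq ↦
          (Nat.lt_of_floor_lt (Finset.mem_Ioc.1 hq).1).le
    _ ≤ (∑' n : ℕ, (n : ℝ) ^ σ * wk k n ^ l) * Q ^ (-1 + ε) := by
        gcongr
        linarith [le_max_left (1 - ε) 0]

/-- The numbers in whose factorization no prime has exponent exactly `k`. They are what is left of
a positive integer after its prime powers `p ^ k` with exact exponent `k` have been split off. -/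
def avoidingExponent (k : ℕ) : Set ℕ := {n | ∀ p, n.factorization p ≠ k}

lemma mul_mem_avoidingExponent_iff {k m n : ℕ} (hk : k ≠ 0) (h : m.Coprime n) :
    m * n ∈ avoidingExponent k ↔ m ∈ avoidingExponent k ∧ n ∈ avoidingExponent k := by
  simp only [avoidingExponent, Set.mem_ofPred_eq, Nat.factorization_mul_of_coprime h,
    Finsupp.add_apply, ← forall_and]
  refine forall_congr' fun p ↦ ?_
  have hp : m.factorization p = 0 ∨ n.factorization p = 0 :=
    or_iff_not_imp_left.2 fun hm ↦ Finsupp.notMem_support_iff.1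
      (Finset.disjoint_left.1 h.disjoint_primeFactors (Finsupp.mem_support_iff.2 hm))
  lia

lemma one_mem_avoidingExponent {k : ℕ} (hk : k ≠ 0) : 1 ∈ avoidingExponent k := by
  simp [avoidingExponent, hk.symm]

lemma prime_pow_mem_avoidingExponent_iff {k p j : ℕ} (hk : k ≠ 0) (hp : p.Prime) :
    p ^ j ∈ avoidingExponent k ↔ j ≠ k := by
  simp only [avoidingExponent, Set.mem_ofPred_eq, hp.factorization_pow, Finsupp.single_apply]
  refine ⟨fun h ↦ by simpa using h p, fun h q ↦ ?_⟩
  split_ifs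
  exacts [h, hk.symm]

lemma wk_prime_pow_pow_self_le {k p j : ℕ} (hk : 4 ≤ k) (hp : p.Prime) (hj : j ≠ 0)
    (hjk : j ≠ k) :
    wk k (p ^ j) ^ k ≤ (k : ℝ) ^ k * (p : ℝ) ^ (-(1 + (1 - 1 / (2 * k)) * j : ℝ)) := by
  have hp₁ : (1 : ℝ) ≤ p := mod_cast hp.one_le
  by_cases hdvd : k ∣ j
  · obtain ⟨i, rfl⟩ := hdvd
    have hi : (2 : ℝ) ≤ i := by
      have : i ≠ 0 ∧ i ≠ 1 := ⟨right_ne_zero_of_mul hj, by rintro rfl; simp at hjk⟩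
      exact_mod_cast (by lia : 2 ≤ i)
    rw [wk_prime_pow_mul (by lia) hp (right_ne_zero_of_mul hj), ← rpow_mul_natCast p.cast_nonneg]
    calc (p : ℝ) ^ (-i * k : ℝ) ≤ (p : ℝ) ^ (-(1 + (1 - 1 / (2 * k)) * (k * i : ℕ)) : ℝ) := by
          gcongr
          have : (1 - 1 / (2 * k) : ℝ) * (k * i) = k * i - i / 2 := by field
          push_cast
          linarith
      _ ≤ (k : ℝ) ^ k * (p : ℝ) ^ (-(1 + (1 - 1 / (2 * k)) * (k * i : ℕ)) : ℝ) :=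
          le_mul_of_one_le_left (by positivity) (one_le_pow₀ (by exact_mod_cast (by lia : 1 ≤ k)))
  · refine (wk_prime_pow_pow_le (by lia) le_rfl hk hp hj (.inr hdvd)).trans ?_
    gcongr
    have : (0 : ℝ) ≤ 1 / (2 * k) * j := by positivity
    linarith

lemma summable_rpow_mul_indicator_avoidingExponent_wk_pow {k : ℕ} (hk : 4 ≤ k) {τ : ℝ}
    (hτ : τ < 1 - 1 / (2 * k)) :
    Summable fun n : ℕ ↦
      (n : ℝ) ^ τ * (avoidingExponent k).indicator (fun n ↦ wk k n ^ k) n := by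
  have hk₀ : k ≠ 0 := by lia
  refine summable_rpow_mul_of_prime_pow_le (C := k ^ k)
    (Set.indicator_nonneg fun n _ ↦ pow_nonneg (wk_nonneg k n) k)
    (by simp [wk_one, one_mem_avoidingExponent hk₀]) (fun {m n} h ↦ ?_) hτ fun p j hp hj ↦ ?_
  · by_cases hm : m ∈ avoidingExponent k <;> by_cases hn : n ∈ avoidingExponent k <;>
      simp [mul_mem_avoidingExponent_iff hk₀ h, hm, hn, wk_mul k h, mul_pow]
  exact Set.indicator_apply_le' (fun hmem ↦ wk_prime_pow_pow_self_le hk hp hj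
    ((prime_pow_mem_avoidingExponent_iff hk₀ hp).1 hmem)) fun _ ↦ by positivity

lemma exists_eq_pow_mul_and_wk_pow_eq {k q : ℕ} (hk : 2 ≤ k) (hq : q ≠ 0) :
    ∃ m, ∃ r ∈ avoidingExponent k, q = m ^ k * r ∧ wk k q ^ k = wk k r ^ k / (m : ℝ) ^ k := by
  have hk₀ : k ≠ 0 := by lia
  induction q using Nat.recOnPosPrimePosCoprime with
  | zero => exact absurd rfl hq
  | one => exact ⟨1, 1, one_mem_avoidingExponent hk₀, by simp⟩
  | prime_pow p j hp =>
    by_cases hjk : j = k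
    · subst hjk
      refine ⟨p, 1, one_mem_avoidingExponent hk₀, by simp, ?_⟩
      have hwp := wk_prime_pow_mul hk hp one_ne_zero
      simp_all [wk_one, rpow_neg_one]
    · exact ⟨1, p ^ j, (prime_pow_mem_avoidingExponent_iff hk₀ hp).2 hjk, by simp⟩
  | coprime a b ha hb hab iha ihb =>
    obtain ⟨m, r, hr, rfl, hwa⟩ := iha (by lia)
    obtain ⟨n, s, hs, rfl, hwb⟩ := ihb (by lia)
    have hrs : r.Coprime s := hab.coprime_mul_left.coprime_mul_left_right
    refine ⟨m * n, r * s, (mul_mem_avoidingExponent_iff hk₀ hrs).2 ⟨hr, hs⟩, by ring, ?_⟩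
    rw [wk_mul k hab, mul_pow, hwa, hwb, wk_mul k hrs, div_mul_div_comm]
    push_cast
    simp only [mul_pow]

theorem exists_sum_Ioc_wk_pow_self_le {k : ℕ} (hk : 4 ≤ k) :
    ∃ C > 0, ∀ Q : ℝ, 0 < Q →
      ∑ q ∈ Finset.Ioc ⌊Q⌋₊ ⌊2 * Q⌋₊, wk k q ^ k ≤ C * Q ^ (-1 + 1 / (k : ℝ)) := by
  let g := (avoidingExponent k).indicator fun n ↦ wk k n ^ k
  have hg : ∀ n, 0 ≤ g n := Set.indicator_nonneg fun n _ ↦ pow_nonneg (wk_nonneg k n) k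
  have hk₀ : k ≠ 0 := by lia
  have hs : Summable fun n : ℕ ↦ (n : ℝ) ^ (1 - 1 / (k : ℝ)) * g n := by
    refine summable_rpow_mul_indicator_avoidingExponent_wk_pow hk ?_
    gcongr
    exact lt_mul_of_one_lt_left (by positivity) one_lt_two
  have hC : 0 < ∑' n : ℕ, (n : ℝ) ^ (1 - 1 / (k : ℝ)) * g n :=
    hs.tsum_pos (fun n ↦ mul_nonneg (by positivity) (hg n)) 1
      (by simp [g, wk_one, one_mem_avoidingExponent hk₀])
  refine ⟨2 ^ (1 / (k : ℝ)) * ∑' n : ℕ, (n : ℝ) ^ (1 - 1 / (k : ℝ)) * g n, by positivity,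
    fun Q hQ ↦ ?_⟩
  calc ∑ q ∈ Finset.Ioc ⌊Q⌋₊ ⌊2 * Q⌋₊, wk k q ^ k
      ≤ Q⁻¹ * ((2 * Q) ^ (1 / (k : ℝ)) * ∑' n : ℕ, (n : ℝ) ^ (1 - 1 / (k : ℝ)) * g n) := by
        refine sum_Ioc_le_of_forall_exists_eq_pow_mul hk₀ hg (fun q hq ↦ ?_) hs hQ (by positivity)
        obtain ⟨m, r, hr, hqr, hw⟩ := exists_eq_pow_mul_and_wk_pow_eq (by lia : 2 ≤ k) hq
        exact ⟨m, r, hqr, by simp [g, hr, hw]⟩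
    _ = 2 ^ (1 / (k : ℝ)) * (∑' n : ℕ, (n : ℝ) ^ (1 - 1 / (k : ℝ)) * g n) *
          Q ^ (-1 + 1 / (k : ℝ)) := by
        rw [mul_rpow two_pos.le hQ.le, rpow_add hQ, rpow_neg_one]
        ring

end Weights

theorem wk_power_sums (ε : ℝ) (hε : 0 < ε) (k : ℕ) (hk : 4 ≤ k) :
    (∃ C₁ > 0, ∀ Q : ℝ, 1 ≤ Q →
      ∑ q ∈ Finset.Ioc ⌊Q⌋₊ ⌊2 * Q⌋₊, wk 3 q ^ 4 ≤ C₁ * Q ^ (-1 + ε)) ∧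
    (∃ C₂ > 0, ∀ Q : ℝ, 1 ≤ Q →
      ∑ q ∈ Finset.Ioc ⌊Q⌋₊ ⌊2 * Q⌋₊, wk k q ^ k ≤ C₂ * Q ^ (-1 + 1 / (k : ℝ))) := by
  obtain ⟨C, hC, hsum⟩ := exists_sum_Ioc_wk_pow_self_le hk
  exact ⟨exists_sum_Ioc_wk_pow_le_rpow_neg_one_add three_ne_zero (by lia) le_rfl hε,
    C, hC, fun Q hQ ↦ hsum Q (by linarith)⟩
end

section
/- Let k ≥ 1 be a fixed integer, let q and N be positive integers each exceeding 1, let 0 < δ < 1/2, and let a be an integer with q ∤ a. Let S denote the number of integers n with N < n ≤ 2N, gcd(n,q) = 1, and ‖a n^k / q‖ < δ, where ‖x‖ is the distance from x to the nearest integer. Then for every fixed ε > 0 there is a constant C (depending only on ε and k) such that S ≤ C·δ·q^ε·(q + N). -/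
open scoped BigOperators Classical

/-!
Write `a / q = b / d` in lowest terms, so `d > 1`. If `‖b n ^ k / d‖ < δ` with `n` coprime to `d`,
then `b n ^ k` is congruent modulo `d` to one of the `2 ⌊δ d⌋` nonzero integers of absolute value
at most `δ d`; zero is excluded because `b n ^ k` is a unit modulo `d > 1`. Each of these residues
is taken by at most `ρ` unit classes, where `ρ` is the number of `k`-th roots of unity modulo `d`,
and each class meets an interval of length `N` at most `N / d + 1` times. Finally
`ρ ≤ (2 k) ^ ω(d) = O(d ^ ε)`, since `(ZMod (p ^ m))ˣ` has a cyclic subgroup of index at most `2`.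
-/

open Finset

section RootsOfUnity

theorem card_powMonoidHom_ker_le_mul_index {G : Type*} [CommGroup G] [Finite G] (H : Subgroup G)
    [IsCyclic H] {k : ℕ} (hk : 0 < k) :
    Nat.card (powMonoidHom k : G →* G).ker ≤ k * H.index := by
  set K := (powMonoidHom k : G →* G).ker
  have card_subgroupOf_le : Nat.card (H.subgroupOf K) ≤ k := by
    let f : H.subgroupOf K → (powMonoidHom k : H →* H).ker :=
      fun x ↦ ⟨⟨x, x.2⟩, Subtype.ext x.1.2⟩
    have hf : Function.Injective f := fun x y hxy ↦
      Subtype.ext (Subtype.ext (congrArg (fun z ↦ (z.1 : G)) hxy))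
    calc Nat.card (H.subgroupOf K)
        ≤ Nat.card (powMonoidHom k : H →* H).ker := Nat.card_le_card_of_injective f hf
      _ = (Nat.card H).gcd k := IsCyclic.card_powMonoidHom_ker H k
      _ ≤ k := Nat.gcd_le_right _ hk
  have relIndex_le : H.relIndex K ≤ H.index := by
    rw [← H.relIndex_top_right]
    exact Subgroup.relIndex_le_of_le_right le_top (by simpa using Subgroup.index_ne_zero_of_finite)
  calc Nat.card K = Nat.card (H.subgroupOf K) * H.relIndex K :=
        (H.subgroupOf K).card_mul_index.symm
    _ ≤ k * H.index := Nat.mul_le_mul card_subgroupOf_le relIndex_le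

theorem exists_isCyclic_index_le_two_units_two_pow (m : ℕ) :
    ∃ H : Subgroup (ZMod (2 ^ m))ˣ, IsCyclic H ∧ H.index ≤ 2 := by
  obtain hm | hm := le_total m 2
  · have := (ZMod.isCyclic_units_two_pow_iff m).2 hm
    exact ⟨⊤, inferInstance, by simp⟩
  · obtain ⟨n, rfl⟩ := Nat.exists_eq_add_of_le' hm
    have isUnit_five : IsUnit (5 : ZMod (2 ^ (n + 2))) := by
      exact_mod_cast (ZMod.isUnit_iff_coprime 5 _).2 (Nat.Coprime.pow_right _ (by norm_num))
    obtain ⟨u, hu⟩ := isUnit_five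
    have card_zpowers : Nat.card (Subgroup.zpowers u) = 2 ^ n := by
      rw [Nat.card_zpowers, ← orderOf_units, hu, ZMod.orderOf_five]
    have card_units : Nat.card (ZMod (2 ^ (n + 2)))ˣ = 2 ^ n * 2 := by
      rw [Nat.card_eq_fintype_card, ZMod.card_units_eq_totient,
        Nat.totient_prime_pow_succ Nat.prime_two, pow_succ]
      norm_num
    have index_eq : (Subgroup.zpowers u).index = 2 := by
      have h := (Subgroup.zpowers u).card_mul_index
      rw [card_zpowers, card_units] at h
      exact Nat.eq_of_mul_eq_mul_left (by positivity) h
    exact ⟨Subgroup.zpowers u, inferInstance, index_eq.le⟩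

theorem card_rootsOfUnity_zmod_prime_pow_le {k p : ℕ} (hk : 0 < k) (hp : p.Prime) (m : ℕ) :
    Nat.card (rootsOfUnity k (ZMod (p ^ m))) ≤ 2 * k := by
  have : NeZero (p ^ m) := ⟨pow_ne_zero m hp.ne_zero⟩
  obtain ⟨H, hH, hindex⟩ : ∃ H : Subgroup (ZMod (p ^ m))ˣ, IsCyclic H ∧ H.index ≤ 2 := by
    obtain rfl | hp2 := eq_or_ne p 2
    · exact exists_isCyclic_index_le_two_units_two_pow m
    · have := ZMod.isCyclic_units_of_prime_pow p hp hp2 m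
      exact ⟨⊤, inferInstance, by simp⟩
  calc Nat.card (rootsOfUnity k (ZMod (p ^ m)))
      ≤ k * H.index := by
        rw [rootsOfUnity_eq_ker]
        exact card_powMonoidHom_ker_le_mul_index H hk
    _ ≤ 2 * k := by rw [mul_comm]; gcongr

theorem card_rootsOfUnity_prod (k : ℕ) (M N : Type*) [CommMonoid M] [CommMonoid N] :
    Nat.card (rootsOfUnity k (M × N)) =
      Nat.card (rootsOfUnity k M) * Nat.card (rootsOfUnity k N) := by
  rw [← Nat.card_prod]
  let e : rootsOfUnity k (M × N) ≃ (rootsOfUnity k M).prod (rootsOfUnity k N) :=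
    MulEquiv.prodUnits.toEquiv.subtypeEquiv fun x ↦ by
      simp only [MulEquiv.toEquiv_eq_coe, EquivLike.coe_coe, Subgroup.mem_prod, mem_rootsOfUnity,
        ← MulEquiv.prodUnits.map_eq_one_iff (x := x ^ k), map_pow, Prod.ext_iff, Prod.pow_fst,
        Prod.pow_snd, Prod.fst_one, Prod.snd_one]
  exact Nat.card_congr (e.trans (Subgroup.prodEquiv _ _).toEquiv)

theorem card_rootsOfUnity_zmod_mul (k : ℕ) {m n : ℕ} (h : m.Coprime n) :
    Nat.card (rootsOfUnity k (ZMod (m * n))) =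
      Nat.card (rootsOfUnity k (ZMod m)) * Nat.card (rootsOfUnity k (ZMod n)) := by
  rw [← card_rootsOfUnity_prod]
  exact Nat.card_congr
    ((ZMod.chineseRemainder h).toMulEquiv.restrictRootsOfUnity k).toEquiv

theorem card_rootsOfUnity_zmod_le_pow_card_primeFactors {k q : ℕ} (hk : 0 < k) (hq : q ≠ 0) :
    Nat.card (rootsOfUnity k (ZMod q)) ≤ (2 * k) ^ #q.primeFactors := by
  induction q using Nat.recOnPosPrimePosCoprime with
  | prime_pow p n hp hn =>
    simpa [Nat.primeFactors_prime_pow hn.ne' hp] using card_rootsOfUnity_zmod_prime_pow_le hk hp n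
  | zero => exact absurd rfl hq
  | one =>
    have : Subsingleton (rootsOfUnity k (ZMod 1)) := inferInstance
    simpa using Finite.card_le_one_iff_subsingleton.2 this
  | coprime m n hm hn hmn ihm ihn =>
    rw [card_rootsOfUnity_zmod_mul k hmn, hmn.primeFactors_mul,
      card_union_of_disjoint hmn.disjoint_primeFactors, pow_add]
    exact Nat.mul_le_mul (ihm (by omega)) (ihn (by omega))

theorem exists_pow_card_primeFactors_le_mul_rpow {A ε : ℝ} (hA : 1 ≤ A) (hε : 0 < ε) :
    ∃ C > 0, ∀ q : ℕ, q ≠ 0 → A ^ #q.primeFactors ≤ C * (q : ℝ) ^ ε := by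
  obtain ⟨P, hP⟩ : ∃ P : ℕ, ∀ p ≥ P, A ≤ (p : ℝ) ^ ε :=
    Filter.eventually_atTop.1 <|
      ((tendsto_rpow_atTop hε).comp tendsto_natCast_atTop_atTop).eventually_ge_atTop A
  refine ⟨A ^ P, by positivity, fun q hq ↦ ?_⟩
  set small := q.primeFactors.filter (· < P)
  set large := q.primeFactors.filter (¬ · < P)
  have card_small_le : #small ≤ P := by
    simpa using card_le_card (t := range P) fun p hp ↦ mem_range.2 (mem_filter.1 hp).2
  have prod_large_le : ∏ p ∈ large, p ≤ q := Nat.le_of_dvd (Nat.pos_of_ne_zero hq) <|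
    (prod_dvd_prod_of_subset _ _ _ (filter_subset _ _)).trans q.prod_primeFactors_dvd
  have pow_card_large_le : A ^ #large ≤ (q : ℝ) ^ ε := calc
    A ^ #large ≤ ∏ p ∈ large, (p : ℝ) ^ ε := by
      rw [← prod_const]
      exact prod_le_prod (fun _ _ ↦ by positivity)
        fun p hp ↦ hP p (not_lt.1 (mem_filter.1 hp).2)
    _ = ((∏ p ∈ large, p : ℕ) : ℝ) ^ ε := by
      rw [Real.finsetProd_rpow _ _ fun _ _ ↦ by positivity, Nat.cast_prod]
    _ ≤ (q : ℝ) ^ ε := by gcongr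
  calc A ^ #q.primeFactors = A ^ #small * A ^ #large := by
        rw [← pow_add, card_filter_add_card_filter_not]
    _ ≤ A ^ P * (q : ℝ) ^ ε := by gcongr

theorem exists_card_rootsOfUnity_zmod_le_mul_rpow {k : ℕ} (hk : 0 < k) {ε : ℝ} (hε : 0 < ε) :
    ∃ C > 0, ∀ q : ℕ, q ≠ 0 → (Nat.card (rootsOfUnity k (ZMod q)) : ℝ) ≤ C * (q : ℝ) ^ ε := by
  have one_le : (1 : ℝ) ≤ (2 * k : ℕ) := by exact_mod_cast (by omega : 1 ≤ 2 * k)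
  obtain ⟨C, hC, hbound⟩ := exists_pow_card_primeFactors_le_mul_rpow one_le hε
  refine ⟨C, hC, fun q hq ↦ le_trans ?_ (hbound q hq)⟩
  exact_mod_cast card_rootsOfUnity_zmod_le_pow_card_primeFactors hk hq

end RootsOfUnity

section Counting

theorem card_filter_map_mem_le {G H : Type*} [Group G] [Fintype G] [Group H]
    [DecidableEq H] (f : G →* H) (S : Finset H) :
    #{x | f x ∈ S} ≤ Nat.card f.ker * #S := by
  refine card_le_mul_card_image_of_maps_to (f := f) (fun x hx ↦ (mem_filter.1 hx).2) _ ?_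
  intro y _
  obtain hempty | ⟨x, hx⟩ := (filter (f · = y) {x | f x ∈ S}).eq_empty_or_nonempty
  · simp [hempty]
  · obtain rfl : f x = y := (mem_filter.1 hx).2
    calc #(filter (f · = f x) {x | f x ∈ S})
        ≤ #{z | f z = f x} := card_le_card (filter_subset_filter _ (subset_univ _))
      _ = Nat.card (f ⁻¹' {f x}) := by
        simp only [Nat.card_eq_fintype_card, Fintype.card_subtype, Set.mem_preimage,
          Set.mem_singleton_iff]
      _ = Nat.card f.ker := Nat.card_congr (f.fiberEquivKer x)

theorem card_Ioc_filter_modEq_le {d : ℕ} (hd : 0 < d) (M N v : ℕ) :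
    #{n ∈ Ioc M (M + N) | n ≡ v [MOD d]} ≤ N / d + 1 := by
  have floor_sub_floor_le :
      ⌊((M + N : ℕ) - v : ℚ) / d⌋ - ⌊((M : ℚ) - v) / d⌋ ≤ (N / d : ℕ) + 1 := by
    have add_div_eq : ((M + N : ℕ) - v : ℚ) / d = ((M : ℚ) - v) / d + (N : ℚ) / d := by
      push_cast; ring
    have h := Int.le_floor_add_floor (((M : ℚ) - v) / d) ((N : ℚ) / d)
    rw [← add_div_eq, Rat.floor_natCast_div_natCast] at h
    omega
  have h := Nat.Ioc_filter_modEq_card M (M + N) hd v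
  have : ((#{n ∈ Ioc M (M + N) | n ≡ v [MOD d]} : ℕ) : ℤ) ≤ (N / d : ℕ) + 1 :=
    h.trans_le (max_le floor_sub_floor_le (by positivity))
  exact_mod_cast this

theorem card_Ioc_filter_natCast_mem_le {d : ℕ} (hd : 0 < d) (M N : ℕ) (T : Finset (ZMod d)) :
    #((Ioc M (M + N)).filter fun n : ℕ ↦ (n : ZMod d) ∈ T) ≤ (N / d + 1) * #T := by
  have : NeZero d := ⟨hd.ne'⟩
  refine card_le_mul_card_image_of_maps_to (f := fun n : ℕ ↦ (n : ZMod d))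
    (fun n hn ↦ (mem_filter.1 hn).2) _ fun x _ ↦ ?_
  refine (card_le_card fun n hn ↦ ?_).trans (card_Ioc_filter_modEq_le hd M N x.val)
  simp only [mem_filter] at hn ⊢
  exact ⟨hn.1.1, by rw [← ZMod.natCast_eq_natCast_iff, hn.2, ZMod.natCast_zmod_val]⟩

theorem card_Ioc_filter_coprime_mul_pow_mem_le {d : ℕ} (hd : 0 < d) {b : ZMod d} (hb : IsUnit b)
    (k M N : ℕ) (J : Finset (ZMod d)) :
    #((Ioc M (M + N)).filter fun n : ℕ ↦ n.Coprime d ∧ b * (n : ZMod d) ^ k ∈ J) ≤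
      #J * Nat.card (rootsOfUnity k (ZMod d)) * (N / d + 1) := by
  have : NeZero d := ⟨hd.ne'⟩
  obtain ⟨u, rfl⟩ := hb
  set S : Finset (ZMod d)ˣ := {y | (u * y : ZMod d) ∈ J}
  set T : Finset (ZMod d)ˣ := {x | powMonoidHom k x ∈ S}
  have card_S_le : #S ≤ #J := card_le_card_of_injOn (fun y ↦ (u * y : ZMod d))
    (fun y hy ↦ (mem_filter.1 hy).2) fun x _ y _ hxy ↦ Units.ext (u.isUnit.mul_left_cancel hxy)
  have card_T_le : #T ≤ #J * Nat.card (rootsOfUnity k (ZMod d)) := calc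
    #T ≤ Nat.card (rootsOfUnity k (ZMod d)) * #S := by
      rw [rootsOfUnity_eq_ker]
      exact card_filter_map_mem_le _ S
    _ ≤ #J * Nat.card (rootsOfUnity k (ZMod d)) := by rw [mul_comm]; gcongr
  calc #((Ioc M (M + N)).filter fun n : ℕ ↦ n.Coprime d ∧ u * (n : ZMod d) ^ k ∈ J)
      ≤ #((Ioc M (M + N)).filter fun n : ℕ ↦ (n : ZMod d) ∈ T.image Units.val) := by
        refine card_le_card (monotone_filter_right _ fun n _ ⟨hn, hmem⟩ ↦ mem_image.2 ?_)
        exact ⟨ZMod.unitOfCoprime n hn, by simpa [T, S] using hmem, ZMod.coe_unitOfCoprime n hn⟩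
    _ ≤ (N / d + 1) * #(T.image Units.val) := card_Ioc_filter_natCast_mem_le hd M N _
    _ ≤ (N / d + 1) * #T := by gcongr; exact card_image_le
    _ ≤ #J * Nat.card (rootsOfUnity k (ZMod d)) * (N / d + 1) := by rw [mul_comm]; gcongr

theorem exists_intCast_eq_of_abs_sub_round_lt {d : ℕ} (hd : 0 < d) {m : ℤ} {δ : ℝ}
    (h : |(m / d : ℝ) - round (m / d : ℝ)| < δ) :
    ∃ j : ℤ, |j| ≤ ⌊δ * d⌋₊ ∧ (m : ZMod d) = j := by
  set r : ℤ := round (m / d : ℝ)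
  have hd' : (0 : ℝ) < d := by exact_mod_cast hd
  have abs_remainder_lt : |((m - r * d : ℤ) : ℝ)| < δ * d := calc
    |((m - r * d : ℤ) : ℝ)| = |(m / d - r : ℝ)| * d := by
      rw [← abs_of_pos hd', ← abs_mul, abs_of_pos hd']
      push_cast
      field_simp
    _ < δ * d := by gcongr
  refine ⟨m - r * d, ?_, by simp⟩
  rw [Int.abs_eq_natAbs, Nat.cast_le]
  exact Nat.le_floor (by simpa [Nat.cast_natAbs] using abs_remainder_lt.le)

/-- The integers `n` coprime to `q` in the interval `(M, M + N]` such that the distance from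
`a n ^ k / q` to the nearest integer is less than `δ`: the set counted by the theorem, for an
interval in arbitrary position. -/
noncomputable def nearIntPowers (k q M N : ℕ) (a : ℤ) (δ : ℝ) : Finset ℕ :=
  (Ioc M (M + N)).filter fun n ↦ n.Coprime q ∧
    |(a * n ^ k / q : ℝ) - round (a * n ^ k / q : ℝ)| < δ

theorem card_nearIntPowers_le {d : ℕ} (hd : 1 < d) {b : ℤ} (hb : IsCoprime b d)
    (k M N : ℕ) (δ : ℝ) :
    #(nearIntPowers k d M N b δ) ≤
      2 * ⌊δ * d⌋₊ * Nat.card (rootsOfUnity k (ZMod d)) * (N / d + 1) := by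
  have : Nontrivial (ZMod d) := ZMod.nontrivial_iff.2 hd.ne'
  have hbu : IsUnit (b : ZMod d) := (ZMod.coe_int_isUnit_iff_isCoprime b d).2 hb.symm
  set L := ⌊δ * d⌋₊
  set J : Finset (ZMod d) := ((Icc (-(L : ℤ)) L).erase 0).image Int.cast
  have card_J_le : #J ≤ 2 * L := by
    refine card_image_le.trans ?_
    rw [card_erase_of_mem (by simp), Int.card_Icc]
    omega
  calc #(nearIntPowers k d M N b δ)
      ≤ #((Ioc M (M + N)).filter fun n : ℕ ↦
          n.Coprime d ∧ (b : ZMod d) * (n : ZMod d) ^ k ∈ J) := by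
        refine card_le_card (monotone_filter_right _ fun n _ ⟨hn, hlt⟩ ↦ ⟨hn, ?_⟩)
        obtain ⟨j, hjL, hj⟩ := exists_intCast_eq_of_abs_sub_round_lt (m := b * n ^ k)
          (zero_lt_one.trans hd) (by exact_mod_cast hlt)
        have isUnit_j : IsUnit (j : ZMod d) := by
          rw [← hj]
          push_cast
          exact hbu.mul (((ZMod.isUnit_iff_coprime n d).2 hn).pow k)
        have hj0 : j ≠ 0 := by
          rintro rfl
          exact isUnit_j.ne_zero Int.cast_zero
        exact mem_image.2 ⟨j, mem_erase.2 ⟨hj0, mem_Icc.2 (abs_le.1 hjL)⟩, by rw [← hj]; simp⟩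
    _ ≤ #J * Nat.card (rootsOfUnity k (ZMod d)) * (N / d + 1) :=
        card_Ioc_filter_coprime_mul_pow_mem_le (zero_lt_one.trans hd) hbu k M N J
    _ ≤ 2 * L * Nat.card (rootsOfUnity k (ZMod d)) * (N / d + 1) := by gcongr

theorem exists_isCoprime_one_lt_dvd_div_eq_div {q : ℕ} (hq : 0 < q) {a : ℤ} (ha : ¬ (q : ℤ) ∣ a) :
    ∃ (b : ℤ) (d : ℕ), 1 < d ∧ d ∣ q ∧ IsCoprime b d ∧ (a / q : ℝ) = b / d := by
  set x : ℚ := a / (q : ℤ) with hx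
  have den_ne_one : x.den ≠ 1 := by
    rwa [Ne, Rat.den_div_intCast_eq_one_iff a q (by omega)]
  have den_dvd : x.den ∣ q := by
    rw [hx, ← Rat.divInt_eq_div]
    exact_mod_cast Rat.den_dvd a q
  refine ⟨x.num, x.den, by have := x.den_pos; omega, den_dvd, Rat.isCoprime_num_den x, ?_⟩
  rw [← Rat.cast_def, hx]
  push_cast
  rfl

end Counting

theorem counting_lemma_general {k : ℕ} (hk : 0 < k) {ε : ℝ} (hε : 0 < ε) :
    ∃ C > 0, ∀ q M N : ℕ, 0 < q → ∀ δ : ℝ, 0 ≤ δ → ∀ a : ℤ, ¬ (q : ℤ) ∣ a →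
      (#(nearIntPowers k q M N a δ) : ℝ) ≤ C * δ * (q : ℝ) ^ ε * (q + N) := by
  obtain ⟨C, hC, hroots⟩ := exists_card_rootsOfUnity_zmod_le_mul_rpow hk hε
  refine ⟨2 * C, by positivity, fun q M N hq δ hδ a ha ↦ ?_⟩
  obtain ⟨b, d, hd, hdq, hb, hab⟩ := exists_isCoprime_one_lt_dvd_div_eq_div hq ha
  have : (0 : ℝ) < d := by exact_mod_cast zero_lt_one.trans hd
  have hdq' : (d : ℝ) ≤ q := by exact_mod_cast Nat.le_of_dvd hq hdq
  have frac_eq (n : ℕ) : (a * n ^ k / q : ℝ) = b * n ^ k / d := by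
    rw [mul_div_right_comm, hab, div_mul_eq_mul_div]
  set ρ := Nat.card (rootsOfUnity k (ZMod d))
  have card_le : #(nearIntPowers k q M N a δ) ≤ 2 * ⌊δ * d⌋₊ * ρ * (N / d + 1) := by
    simp only [nearIntPowers, frac_eq]
    exact (card_le_card (monotone_filter_right _ fun n _ h ↦
      ⟨Nat.Coprime.coprime_dvd_right hdq h.1, h.2⟩)).trans
        (card_nearIntPowers_le hd hb k M N δ)
  calc (#(nearIntPowers k q M N a δ) : ℝ)
      ≤ 2 * ⌊δ * d⌋₊ * ρ * ((N / d : ℕ) + 1) := by exact_mod_cast card_le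
    _ ≤ 2 * (δ * d) * (C * (d : ℝ) ^ ε) * (N / d + 1) := by
        gcongr
        · exact Nat.floor_le (by positivity)
        · exact hroots d (by omega)
        · exact Nat.cast_div_le
    _ = 2 * C * δ * (d : ℝ) ^ ε * (d + N) := by field_simp; ring
    _ ≤ 2 * C * δ * (q : ℝ) ^ ε * (q + N) := by gcongr

theorem counting_lemma (k : ℕ) (hk : 1 ≤ k) (ε : ℝ) (hε : 0 < ε) :
    ∃ C > 0, ∀ q N : ℕ, 1 < q → 1 < N → ∀ δ : ℝ, 0 < δ → δ < 1 / 2 →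
      ∀ a : ℤ, ¬ ((q : ℤ) ∣ a) →
      (((Finset.Ioc N (2 * N)).filter (fun n => Nat.gcd n q = 1 ∧
          |(a : ℝ) * (n : ℝ) ^ k / (q : ℝ) -
            (round ((a : ℝ) * (n : ℝ) ^ k / (q : ℝ)) : ℤ)| < δ)).card : ℝ) ≤
        C * δ * (q : ℝ) ^ ε * ((q : ℝ) + (N : ℝ)) := by
  obtain ⟨C, hC, hbound⟩ := counting_lemma_general hk hε
  refine ⟨C, hC, fun q N hq _ δ hδ _ a ha ↦ ?_⟩
  simpa only [two_mul, nearIntPowers] using hbound q N N (by omega) δ hδ.le a ha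
end
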